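/- The number of elements of order exactly q − 1 in Ree(q) equals φ(q − 1) · q^3 (q^3 + 1) / 2, where φ is Euler's totient function. -/

import Mathlib

open Matrix

noncomputable section

namespace ReePaper

variable {F : Type*} [Field F] [Fintype F]

/-- The matrix `α(x)`. -/
def amat (t : ℕ) (x : F) : Matrix (Fin 7) (Fin 7) F :=
  !![1, x^t, 0, 0, -x^(3*t+1), -x^(3*t+2), x^(4*t+2);
     0, 1, x, x^(t+1), -x^(2*t+1), 0, -x^(3*t+2);
     0, 0, 1, x^t, -x^(2*t), 0, x^(3*t+1);
     0, 0, 0, 1, x^t, 0, 0;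
     0, 0, 0, 0, 1, -x, x^(t+1);
     0, 0, 0, 0, 0, 1, -x^t;
     0, 0, 0, 0, 0, 0, 1]

/-- The matrix `β(x)`. -/
def bmat (t : ℕ) (x : F) : Matrix (Fin 7) (Fin 7) F :=
  !![1, 0, -x^t, 0, -x, 0, -x^(t+1);
     0, 1, 0, x^t, 0, -x^(2*t), 0;
     0, 0, 1, 0, 0, 0, x;
     0, 0, 0, 1, 0, x^t, 0;
     0, 0, 0, 0, 1, 0, x^t;
     0, 0, 0, 0, 0, 1, 0;
     0, 0, 0, 0, 0, 0, 1]

/-- The matrix `γ(x)`. -/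
def cmat (t : ℕ) (x : F) : Matrix (Fin 7) (Fin 7) F :=
  !![1, 0, 0, -x^t, 0, -x, -x^(2*t);
     0, 1, 0, 0, -x^t, 0, x;
     0, 0, 1, 0, 0, x^t, 0;
     0, 0, 0, 1, 0, 0, -x^t;
     0, 0, 0, 0, 1, 0, 0;
     0, 0, 0, 0, 0, 1, 0;
     0, 0, 0, 0, 0, 0, 1]

/-- The diagonal matrix `h(λ)`. -/
def hmat (t : ℕ) (l : Fˣ) : Matrix (Fin 7) (Fin 7) F :=
  Matrix.diagonal ![((l ^ (t : ℤ) : Fˣ) : F), ((l ^ (1 - (t : ℤ)) : Fˣ) : F),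
    ((l ^ (2 * (t : ℤ) - 1) : Fˣ) : F), 1, ((l ^ (1 - 2 * (t : ℤ)) : Fˣ) : F),
    ((l ^ ((t : ℤ) - 1) : Fˣ) : F), ((l ^ (-(t : ℤ)) : Fˣ) : F)]

/-- The matrix `Υ`, the antidiagonal matrix with all entries `-1`. -/
def ups : Matrix (Fin 7) (Fin 7) F :=
  !![0, 0, 0, 0, 0, 0, -1;
     0, 0, 0, 0, 0, -1, 0;
     0, 0, 0, 0, -1, 0, 0;
     0, 0, 0, -1, 0, 0, 0;
     0, 0, -1, 0, 0, 0, 0;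
     0, -1, 0, 0, 0, 0, 0;
     -1, 0, 0, 0, 0, 0, 0]

/-- `S(a, b, c) = α(a) β(b) γ(c)`. -/
def Smat (t : ℕ) (a b c : F) : Matrix (Fin 7) (Fin 7) F :=
  amat t a * bmat t b * cmat t c

/-- The Ree group `Ree(q) = ⟨α(x), β(x), γ(x), h(λ), Υ⟩ ≤ GL(7, q)`. -/
def ReeGroup (t : ℕ) : Subgroup (GL (Fin 7) F) :=
  Subgroup.closure {g : GL (Fin 7) F |
    (∃ x : F, (g : Matrix (Fin 7) (Fin 7) F) = amat t x) ∨
    (∃ x : F, (g : Matrix (Fin 7) (Fin 7) F) = bmat t x) ∨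
    (∃ x : F, (g : Matrix (Fin 7) (Fin 7) F) = cmat t x) ∨
    (∃ l : Fˣ, (g : Matrix (Fin 7) (Fin 7) F) = hmat t l) ∨
    (g : Matrix (Fin 7) (Fin 7) F) = ups}

/-- The subgroup `U(q) = ⟨α(x), β(x), γ(x)⟩`. -/
def Usub (t : ℕ) : Subgroup (GL (Fin 7) F) :=
  Subgroup.closure {g : GL (Fin 7) F |
    (∃ x : F, (g : Matrix (Fin 7) (Fin 7) F) = amat t x) ∨
    (∃ x : F, (g : Matrix (Fin 7) (Fin 7) F) = bmat t x) ∨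
    (∃ x : F, (g : Matrix (Fin 7) (Fin 7) F) = cmat t x)}

/-- The subgroup `H(q) = {h(λ) : λ ∈ F_q^×}`. -/
def Hsub (t : ℕ) : Subgroup (GL (Fin 7) F) :=
  Subgroup.closure {g : GL (Fin 7) F |
    ∃ l : Fˣ, (g : Matrix (Fin 7) (Fin 7) F) = hmat t l}

end ReePaper

open ReePaper

/-!
Following Wilson, the generators of the Ree group preserve an alternating product `v × w` on
`F ^ 7` and a product `v ⋆ w` twisted by the Tits endomorphism, the latter on pairs with
`v × w = 0`. Hence the group acts on the ovoid of points `⟨v⟩` with `v = v ⋆ w` for such a `w`.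
The ovoid has `q³ + 1` points, and the action is doubly transitive. An element fixing two points of
the ovoid is determined by one scalar, so the stabilizer of two points is conjugate to the torus
`H(q)`, cyclic of order `q - 1`; a torus element whose square is not `1` has no further fixed
point, and `Υ` inverts it.

Let `g` have order `q - 1`, and let `l` be an odd prime divisor of `q - 1`. Since `q³ + 1 ≡ 2`
modulo `l`, the power `u` of `g` of order `l` fixes two points, and no others. They are permuted
by `g`, and not swapped because `g` commutes with `u ≠ u⁻¹`. So `g` fixes exactly two points.
Hence twice the number of such `g` is the number `(q³ + 1) q³` of ordered pairs of distinct points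
times the number `φ(q - 1)` of generators of a two-point stabilizer.
-/

namespace ReePaper

/-! ### Group actions whose two-point stabilizers are tori -/

section TorusCounting

open MulAction SubMulAction

open scoped Pointwise

variable {G X : Type*} [Group G] [MulAction G X] {N : ℕ} {x y : X}

variable (G N x y) in
/-- The pointwise stabilizer of `{x, y}` behaves like a maximal torus of a rank one group with
torus order `N`: it is cyclic of order `N`, an element whose square is not `1` fixes no third
point, and some `w` swapping `x` and `y` inverts it. -/
structure IsTorusPair : Prop where
  isCyclic : IsCyclic (fixingSubgroup G {x, y})
  card_eq : Nat.card (fixingSubgroup G {x, y}) = N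
  eq_or_eq : ∀ a ∈ fixingSubgroup G {x, y}, a ^ 2 ≠ 1 → ∀ z, a • z = z → z = x ∨ z = y
  exists_inv : ∃ w : G, w • x = y ∧ w • y = x ∧
    ∀ a ∈ fixingSubgroup G {x, y}, w * a * w⁻¹ = a⁻¹

lemma mem_fixingSubgroup_pair {g : G} :
    g ∈ fixingSubgroup G {x, y} ↔ g • x = x ∧ g • y = y := by
  simp only [mem_fixingSubgroup_iff, Set.mem_insert_iff, Set.mem_singleton_iff,
    forall_eq_or_imp, forall_eq]

lemma IsTorusPair.smul (h : IsTorusPair G N x y) (g : G) :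
    IsTorusPair G N (g • x) (g • y) := by
  have himage : g • ({x, y} : Set X) = {g • x, g • y} := by simp [Set.smul_set_insert]
  let e := fixingSubgroupEquivFixingSubgroup himage
  have hconj : ∀ a ∈ fixingSubgroup G {g • x, g • y}, g⁻¹ * a * g ∈ fixingSubgroup G {x, y} := by
    simp only [mem_fixingSubgroup_pair, mul_smul, inv_smul_eq_iff]
    exact fun _ ha ↦ ha
  have := h.isCyclic
  obtain ⟨w, hwx, hwy, hw⟩ := h.exists_inv
  refine ⟨isCyclic_of_surjective e e.surjective, (Nat.card_congr e.toEquiv).symm.trans h.card_eq,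
    fun a ha ha2 z hz ↦ ?_, g * w * g⁻¹, ?_, ?_, fun a ha ↦ ?_⟩
  · have hsq : (g⁻¹ * a * g) ^ 2 ≠ 1 := by
      rwa [Ne, show (g⁻¹ * a * g) ^ 2 = g⁻¹ * a ^ 2 * g⁻¹⁻¹ by simp only [sq]; group,
        conj_eq_one_iff]
    have := h.eq_or_eq _ (hconj a ha) hsq (g⁻¹ • z) (by simp [mul_smul, hz])
    simpa only [inv_smul_eq_iff] using this
  · simp [mul_smul, hwx]
  · simp [mul_smul, hwy]
  · calc g * w * g⁻¹ * a * (g * w * g⁻¹)⁻¹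
        = g * (w * (g⁻¹ * a * g) * w⁻¹) * g⁻¹ := by group
      _ = a⁻¹ := by rw [hw _ (hconj a ha)]; group

lemma IsTorusPair.mem_of_commute (h : IsTorusPair G N x y) {a g : G}
    (ha : a ∈ fixingSubgroup G {x, y}) (ha2 : a ^ 2 ≠ 1) (hag : Commute g a) :
    g ∈ fixingSubgroup G {x, y} := by
  obtain ⟨hax, hay⟩ := mem_fixingSubgroup_pair.1 ha
  have hfix : ∀ z, a • z = z → g • z = x ∨ g • z = y := fun z hz ↦
    h.eq_or_eq a ha ha2 _ (by rw [← mul_smul, ← hag.eq, mul_smul, hz])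
  obtain ⟨w, hwx, hwy, hw⟩ := h.exists_inv
  have hno_swap : ¬ (g • x = y ∧ g • y = x) := by
    rintro ⟨hgx, hgy⟩
    have := h.isCyclic
    have hwg : w * g ∈ fixingSubgroup G {x, y} := by
      simp [mem_fixingSubgroup_pair, mul_smul, hgx, hgy, hwx, hwy]
    have hcomm : w * g * a = a * (w * g) :=
      congrArg Subtype.val (mul_comm' (⟨_, hwg⟩ : fixingSubgroup G {x, y}) ⟨a, ha⟩)
    have hinv : a = a⁻¹ := calc
      a = w * g * a * (w * g)⁻¹ := by rw [hcomm]; group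
      _ = w * (g * a * g⁻¹) * w⁻¹ := by group
      _ = a⁻¹ := by rw [hag.eq, mul_inv_cancel_right, hw a ha]
    exact ha2 (by rw [sq, mul_eq_one_iff_eq_inv]; exact hinv)
  have hinj : g • x = g • y → x = y := fun e ↦ smul_left_cancel g e
  have hx := hfix x hax
  have hy := hfix y hay
  rw [mem_fixingSubgroup_pair]
  grind

lemma exists_ne_fixed_of_orderOf_prime [Finite X] {l : ℕ} (hl : l.Prime) (hl2 : 2 < l)
    (hX : Nat.card X ≡ 2 [MOD l]) {u : G} (hu : orderOf u = l) :
    ∃ x y : X, x ≠ y ∧ u • x = x ∧ u • y = y := by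
  have : Fact l.Prime := ⟨hl⟩
  have hP : IsPGroup l (Subgroup.zpowers u) :=
    IsPGroup.of_card (n := 1) (by rw [Nat.card_zpowers, hu, pow_one])
  have hmod : 2 ≡ Nat.card (fixedPoints (Subgroup.zpowers u) X) [MOD l] :=
    hX.symm.trans (hP.card_modEq_card_fixedPoints X)
  have hcard : 1 < Nat.card (fixedPoints (Subgroup.zpowers u) X) := by
    by_contra! hlt
    have := hmod.eq_of_lt_of_lt hl2 (by lia)
    lia
  have := Finite.one_lt_card_iff_nontrivial.1 hcard
  obtain ⟨⟨x, hx⟩, ⟨y, hy⟩, hxy⟩ := exists_pair_ne (fixedPoints (Subgroup.zpowers u) X)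
  exact ⟨x, y, fun e ↦ hxy (Subtype.ext e), hx ⟨u, Subgroup.mem_zpowers u⟩,
    hy ⟨u, Subgroup.mem_zpowers u⟩⟩

lemma exists_fixed_iff_of_orderOf [Finite X] (hN : N ≠ 0)
    (htorus : ∀ x y : X, x ≠ y → IsTorusPair G N x y)
    {l : ℕ} (hl : l.Prime) (hl2 : 2 < l) (hlN : l ∣ N) (hX : Nat.card X ≡ 2 [MOD l])
    {g : G} (hg : orderOf g = N) :
    ∃ x y : X, x ≠ y ∧ ∀ z, g • z = z ↔ z = x ∨ z = y := by
  set u := g ^ (N / l)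
  have hu : orderOf u = l := by
    subst hg
    exact orderOf_pow_orderOf_div hN hlN
  have hu2 : u ^ 2 ≠ 1 := fun e ↦
    (Nat.le_of_dvd two_pos (hu ▸ orderOf_dvd_of_pow_eq_one e)).not_gt hl2
  obtain ⟨x, y, hxy, hux, huy⟩ := exists_ne_fixed_of_orderOf_prime hl hl2 hX hu
  have huT : u ∈ fixingSubgroup G {x, y} := mem_fixingSubgroup_pair.2 ⟨hux, huy⟩
  have hgT := (htorus x y hxy).mem_of_commute huT hu2 (Commute.self_pow g _)
  obtain ⟨hgx, hgy⟩ := mem_fixingSubgroup_pair.1 hgT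
  refine ⟨x, y, hxy, fun z ↦ ⟨fun hz ↦ ?_, ?_⟩⟩
  · have huz : u ∈ stabilizer G z := pow_mem (mem_stabilizer_iff.2 hz) _
    exact (htorus x y hxy).eq_or_eq u huT hu2 z huz
  · rintro (rfl | rfl) <;> assumption

lemma IsTorusPair.card_orderOf_eq_totient [Finite G] (h : IsTorusPair G N x y) :
    Nat.card {g : G // orderOf g = N ∧ g • x = x ∧ g • y = y} = N.totient := by
  classical
  have := Fintype.ofFinite G
  have := h.isCyclic
  rw [← IsCyclic.card_orderOf_eq_totient (α := fixingSubgroup G {x, y}) (d := N)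
    (by rw [← Nat.card_eq_fintype_card, h.card_eq]), ← Fintype.card_subtype,
    ← Nat.card_eq_fintype_card]
  exact Nat.card_congr
    { toFun g := ⟨⟨g, mem_fixingSubgroup_pair.2 g.2.2⟩, by simpa using g.2.1⟩
      invFun a := ⟨a, by simpa using a.2, mem_fixingSubgroup_pair.1 a.1.2⟩ }

/-- Double counting of the pairs formed by an element of order `N` and an ordered pair of distinct
points fixed by it. -/
theorem two_mul_card_orderOf_eq [Finite G] [Finite X] (hN : N ≠ 0)
    (htorus : ∀ x y : X, x ≠ y → IsTorusPair G N x y)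
    {l : ℕ} (hl : l.Prime) (hl2 : 2 < l) (hlN : l ∣ N) (hX : Nat.card X ≡ 2 [MOD l]) :
    2 * Nat.card {g : G // orderOf g = N} =
      N.totient * (Nat.card X * (Nat.card X - 1)) := by
  classical
  have := Fintype.ofFinite G
  have := Fintype.ofFinite X
  let elements : Finset G := {g | orderOf g = N}
  let fixes (g : G) (p : X × X) : Prop := g • p.1 = p.1 ∧ g • p.2 = p.2
  have habove : ∀ g ∈ elements,
      (Finset.bipartiteAbove fixes (Finset.univ : Finset X).offDiag g).card = 2 := by
    intro g hg
    obtain ⟨x, y, hxy, hfix⟩ := exists_fixed_iff_of_orderOf hN htorus hl hl2 hlN hX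
      (Finset.mem_filter_univ g |>.1 hg)
    rw [show Finset.bipartiteAbove fixes Finset.univ.offDiag g = {(x, y), (y, x)} by
      ext ⟨a, b⟩
      simp only [fixes, Finset.mem_bipartiteAbove, Finset.mem_offDiag, Finset.mem_univ, true_and,
        hfix, Finset.mem_insert, Finset.mem_singleton, Prod.mk.injEq]
      grind]
    exact Finset.card_pair (by simp [hxy])
  have hbelow : ∀ p ∈ (Finset.univ : Finset X).offDiag,
      (Finset.bipartiteBelow fixes elements p).card = N.totient := by
    intro p hp
    rw [← (htorus p.1 p.2 (by simpa using hp)).card_orderOf_eq_totient, Nat.card_eq_fintype_card,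
      Fintype.card_subtype, Finset.bipartiteBelow, Finset.filter_filter]
  have hdouble := Finset.card_mul_eq_card_mul fixes habove hbelow
  rw [Finset.offDiag_card, Finset.card_univ] at hdouble
  rw [Nat.card_eq_fintype_card, Nat.card_eq_fintype_card, Fintype.card_subtype, mul_comm, hdouble,
    mul_comm, Nat.mul_sub_one]

end TorusCounting

/-! ### The invariant products -/

section Products

variable {R : Type*} [CommRing R]

/-- The alternating product on the seven-dimensional module which, in characteristic three, is
preserved by `G₂`. -/
def cross (v w : Fin 7 → R) : Fin 7 → R :=
  ![(v 0 * w 3 - v 3 * w 0) + (v 1 * w 2 - v 2 * w 1),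
    (v 0 * w 4 - v 4 * w 0) - (v 1 * w 3 - v 3 * w 1),
    -(v 0 * w 5 - v 5 * w 0) - (v 2 * w 3 - v 3 * w 2),
    (v 0 * w 6 - v 6 * w 0) - (v 1 * w 5 - v 5 * w 1) - (v 2 * w 4 - v 4 * w 2),
    -(v 1 * w 6 - v 6 * w 1) - (v 3 * w 4 - v 4 * w 3),
    (v 2 * w 6 - v 6 * w 2) - (v 3 * w 5 - v 5 * w 3),
    (v 3 * w 6 - v 6 * w 3) + (v 4 * w 5 - v 5 * w 4)]

/-- The second, twisted product: the ring endomorphism `σ` applied to combinations of the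
Plücker coordinates of the pair `v, w`. The Ree group preserves it on pairs with `cross v w = 0`. -/
def starProd (σ : R →+* R) (v w : Fin 7 → R) : Fin 7 → R :=
  ![σ (v 0 * w 1 - v 1 * w 0),
    σ (v 0 * w 2 - v 2 * w 0),
    σ (-(v 1 * w 4 - v 4 * w 1)),
    σ ((v 1 * w 5 - v 5 * w 1) - (v 2 * w 4 - v 4 * w 2)),
    σ (-(v 2 * w 5 - v 5 * w 2)),
    σ (v 4 * w 6 - v 6 * w 4),
    σ (v 5 * w 6 - v 6 * w 5)]

lemma cross_smul_smul (c d : R) (v w : Fin 7 → R) :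
    cross (c • v) (d • w) = (c * d) • cross v w := by
  simp only [cross, Pi.smul_apply, smul_eq_mul, smul_cons, smul_empty, vecCons_inj]
  refine ⟨?_, ?_, ?_, ?_, ?_, ?_, ?_, trivial⟩ <;> ring

lemma starProd_smul_smul (σ : R →+* R) (c d : R) (v w : Fin 7 → R) :
    starProd σ (c • v) (d • w) = σ (c * d) • starProd σ v w := by
  simp only [starProd, Pi.smul_apply, smul_eq_mul, smul_cons, smul_empty, vecCons_inj, ← map_mul]
  refine ⟨?_, ?_, ?_, ?_, ?_, ?_, ?_, trivial⟩ <;> congr 1 <;> ring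

end Products

variable {F : Type*} [Field F]

/-- The Tits endomorphism `σ : x ↦ x ^ t` of the Ree group: a square root of the inverse of the
Frobenius map `x ↦ x ^ 3`. For `t = 3 ^ m` and `q = 3 ^ (2 * m + 1)` this holds on the field with
`q` elements, where `3 * t ^ 2 = q`. -/
structure IsTits (t : ℕ) (σ : F →+* F) : Prop where
  apply_eq : ∀ x, σ x = x ^ t
  cube : ∀ x, σ (σ x) ^ 3 = x

lemma IsTits.apply_cube {t : ℕ} {σ : F →+* F} (hσ : IsTits t σ) (x : F) : σ (σ x ^ 3) = x := by
  rw [map_pow, hσ.cube]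

section Generators

variable (t : ℕ) (x : F) (l : Fˣ) (v w : Fin 7 → F)

lemma amat_mulVec :
    amat t x *ᵥ v =
      ![v 0 + x ^ t * v 1 - (x ^ t) ^ 3 * x * v 4 - (x ^ t) ^ 3 * x ^ 2 * v 5
          + (x ^ t) ^ 4 * x ^ 2 * v 6,
        v 1 + x * v 2 + x ^ t * x * v 3 - (x ^ t) ^ 2 * x * v 4 - (x ^ t) ^ 3 * x ^ 2 * v 6,
        v 2 + x ^ t * v 3 - (x ^ t) ^ 2 * v 4 + (x ^ t) ^ 3 * x * v 6,
        v 3 + x ^ t * v 4,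
        v 4 - x * v 5 + x ^ t * x * v 6,
        v 5 - x ^ t * v 6,
        v 6] := by
  ext i
  fin_cases i <;> simp [amat, mulVec, dotProduct, Fin.sum_univ_succ] <;> ring

lemma bmat_mulVec :
    bmat t x *ᵥ v =
      ![v 0 - x ^ t * v 2 - x * v 4 - x ^ t * x * v 6,
        v 1 + x ^ t * v 3 - (x ^ t) ^ 2 * v 5,
        v 2 + x * v 6,
        v 3 + x ^ t * v 5,
        v 4 + x ^ t * v 6,
        v 5,
        v 6] := by
  ext i
  fin_cases i <;> simp [bmat, mulVec, dotProduct, Fin.sum_univ_succ] <;> ring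

lemma cmat_mulVec :
    cmat t x *ᵥ v =
      ![v 0 - x ^ t * v 3 - x * v 5 - (x ^ t) ^ 2 * v 6,
        v 1 - x ^ t * v 4 + x * v 6,
        v 2 + x ^ t * v 5,
        v 3 - x ^ t * v 6,
        v 4,
        v 5,
        v 6] := by
  ext i
  fin_cases i <;> simp [cmat, mulVec, dotProduct, Fin.sum_univ_succ] <;> ring

lemma hmat_mulVec :
    hmat t l *ᵥ v =
      ![(l : F) ^ t * v 0, l / (l : F) ^ t * v 1, ((l : F) ^ t) ^ 2 / l * v 2, v 3,
        l / ((l : F) ^ t) ^ 2 * v 4, (l : F) ^ t / l * v 5, v 6 / (l : F) ^ t] := by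
  have h2t : (l : F) ^ ((t : ℤ) * 2) = ((l : F) ^ t) ^ 2 := by norm_cast; rw [pow_mul]
  ext i
  fin_cases i <;> simp [hmat, mulVec_diagonal, zpow_sub₀, h2t, div_eq_mul_inv, mul_comm]

lemma ups_mulVec : ups *ᵥ v = ![-v 6, -v 5, -v 4, -v 3, -v 2, -v 1, -v 0] := by
  ext i
  fin_cases i <;> simp [ups, mulVec, dotProduct, Fin.sum_univ_succ]

lemma cross_amat_mulVec [CharP F 3] :
    cross (amat t x *ᵥ v) (amat t x *ᵥ w) = amat t x *ᵥ cross v w := by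
  simp only [amat_mulVec, cross, cons_val, vecCons_inj]
  generalize x ^ t = y
  and_intros <;> grind

lemma cross_bmat_mulVec [CharP F 3] :
    cross (bmat t x *ᵥ v) (bmat t x *ᵥ w) = bmat t x *ᵥ cross v w := by
  simp only [bmat_mulVec, cross, cons_val, vecCons_inj]
  generalize x ^ t = y
  and_intros <;> grind

lemma cross_cmat_mulVec [CharP F 3] :
    cross (cmat t x *ᵥ v) (cmat t x *ᵥ w) = cmat t x *ᵥ cross v w := by
  simp only [cmat_mulVec, cross, cons_val, vecCons_inj]
  generalize x ^ t = y
  and_intros <;> grind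

lemma cross_hmat_mulVec :
    cross (hmat t l *ᵥ v) (hmat t l *ᵥ w) = hmat t l *ᵥ cross v w := by
  have hl : (l : F) ≠ 0 := l.ne_zero
  have hd : (l : F) ^ t ≠ 0 := pow_ne_zero t hl
  simp only [hmat_mulVec, cross, cons_val, vecCons_inj]
  generalize (l : F) ^ t = d at *
  refine ⟨?_, ?_, ?_, ?_, ?_, ?_, ?_, trivial⟩ <;> field_simp

lemma cross_ups_mulVec : cross (ups *ᵥ v) (ups *ᵥ w) = ups *ᵥ cross v w := by
  simp only [ups_mulVec, cross, cons_val, vecCons_inj]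
  refine ⟨?_, ?_, ?_, ?_, ?_, ?_, ?_, trivial⟩ <;> ring

end Generators

lemma forall_fin_seven {p : Fin 7 → Prop} :
    (∀ i, p i) ↔ p 0 ∧ p 1 ∧ p 2 ∧ p 3 ∧ p 4 ∧ p 5 ∧ p 6 := by
  simp [Fin.forall_fin_succ]

section StarProd

variable {t : ℕ} {σ : F →+* F} {v w : Fin 7 → F}

lemma starProd_amat_mulVec [CharP F 3] (hσ : IsTits t σ) (h : cross v w = 0) (x : F) :
    starProd σ (amat t x *ᵥ v) (amat t x *ᵥ w) = amat t x *ᵥ starProd σ v w := by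
  have hcross (i) : σ (cross v w i) = 0 := by rw [h, Pi.zero_apply, map_zero]
  obtain ⟨y, z, hy, hz⟩ : ∃ y z, σ x = y ∧ σ y = z := ⟨_, _, rfl, rfl⟩
  obtain rfl : x = z ^ 3 := by rw [← hz, ← hy, hσ.cube]
  simp only [forall_fin_seven, cross, cons_val, map_sub, map_mul, map_add, map_neg] at hcross
  simp only [amat_mulVec, starProd, cons_val, vecCons_inj, ← hσ.apply_eq, map_sub, map_mul,
    map_add, map_neg, map_pow, hy, hz]
  clear hy hz h
  and_intros <;> grind

lemma starProd_bmat_mulVec [CharP F 3] (hσ : IsTits t σ) (h : cross v w = 0) (x : F) :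
    starProd σ (bmat t x *ᵥ v) (bmat t x *ᵥ w) = bmat t x *ᵥ starProd σ v w := by
  have hcross (i) : σ (cross v w i) = 0 := by rw [h, Pi.zero_apply, map_zero]
  obtain ⟨y, z, hy, hz⟩ : ∃ y z, σ x = y ∧ σ y = z := ⟨_, _, rfl, rfl⟩
  obtain rfl : x = z ^ 3 := by rw [← hz, ← hy, hσ.cube]
  simp only [forall_fin_seven, cross, cons_val, map_sub, map_mul, map_add, map_neg] at hcross
  simp only [bmat_mulVec, starProd, cons_val, vecCons_inj, ← hσ.apply_eq, map_sub, map_mul,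
    map_add, map_neg, map_pow, hy, hz]
  clear hy hz h
  and_intros <;> grind

lemma starProd_cmat_mulVec [CharP F 3] (hσ : IsTits t σ) (h : cross v w = 0) (x : F) :
    starProd σ (cmat t x *ᵥ v) (cmat t x *ᵥ w) = cmat t x *ᵥ starProd σ v w := by
  have hcross (i) : σ (cross v w i) = 0 := by rw [h, Pi.zero_apply, map_zero]
  obtain ⟨y, z, hy, hz⟩ : ∃ y z, σ x = y ∧ σ y = z := ⟨_, _, rfl, rfl⟩
  obtain rfl : x = z ^ 3 := by rw [← hz, ← hy, hσ.cube]
  simp only [forall_fin_seven, cross, cons_val, map_sub, map_mul, map_add, map_neg] at hcross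
  simp only [cmat_mulVec, starProd, cons_val, vecCons_inj, ← hσ.apply_eq, map_sub, map_mul,
    map_add, map_neg, map_pow, hy, hz]
  clear hy hz h
  and_intros <;> grind

lemma starProd_hmat_mulVec (hσ : IsTits t σ) (l : Fˣ) :
    starProd σ (hmat t l *ᵥ v) (hmat t l *ᵥ w) = hmat t l *ᵥ starProd σ v w := by
  obtain ⟨d, e, hd, he⟩ : ∃ d e, σ l = d ∧ σ d = e := ⟨_, _, rfl, rfl⟩
  have hl : (l : F) = e ^ 3 := by rw [← he, ← hd, hσ.cube]
  have hd0 : d ≠ 0 := by simp [← hd]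
  have he0 : e ≠ 0 := by simpa [← he] using hd0
  simp only [hmat_mulVec, starProd, cons_val, vecCons_inj, ← hσ.apply_eq, map_sub, map_mul,
    map_neg, map_div₀, map_pow, hd, he]
  rw [hl]
  refine ⟨?_, ?_, ?_, ?_, ?_, ?_, ?_, trivial⟩ <;> field_simp

lemma starProd_ups_mulVec :
    starProd σ (ups *ᵥ v) (ups *ᵥ w) = ups *ᵥ starProd σ v w := by
  simp only [ups_mulVec, starProd, cons_val, vecCons_inj, ← map_neg]
  refine ⟨?_, ?_, ?_, ?_, ?_, ?_, ?_, trivial⟩ <;> congr 1 <;> ring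

end StarProd

section LinearAction

variable {n R : Type*} [Fintype n] [DecidableEq n] [CommRing R]

/-- The natural action of `GL n R` on column vectors. -/
instance glAction : DistribMulAction (GL n R) (n → R) where
  smul g v := (g : Matrix n n R) *ᵥ v
  one_smul := one_mulVec
  mul_smul g h v := (mulVec_mulVec v (g : Matrix n n R) (h : Matrix n n R)).symm
  smul_zero g := mulVec_zero (g : Matrix n n R)
  smul_add g := mulVec_add (g : Matrix n n R)

lemma gl_smul_def (g : GL n R) (v : n → R) : g • v = (g : Matrix n n R) *ᵥ v := rfl

instance : SMulCommClass (GL n R) R (n → R) where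
  smul_comm g c v := mulVec_smul (g : Matrix n n R) c v

instance : FaithfulSMul (GL n R) (n → R) where
  eq_of_smul_eq_smul h := Units.ext (mulVec_injective (funext h))

end LinearAction

/-- The standard basis of the seven-dimensional module, indexed from `0` as in the matrices
above. -/
abbrev basisVec (i : Fin 7) : Fin 7 → F := Pi.single i 1

/-- The subgroup of `GL(7, F)` preserving `cross`, and preserving `starProd` on the pairs of
vectors whose `cross` vanishes. -/
def reeStabilizer (σ : F →+* F) : Subgroup (GL (Fin 7) F) where
  carrier := {g | (∀ v w : Fin 7 → F, cross (g • v) (g • w) = g • cross v w) ∧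
    ∀ v w : Fin 7 → F, cross v w = 0 → starProd σ (g • v) (g • w) = g • starProd σ v w}
  one_mem' := by simp
  mul_mem' := by
    rintro g k ⟨hg, hg'⟩ ⟨hk, hk'⟩
    refine ⟨fun v w ↦ by simp only [mul_smul, hg, hk], fun v w h ↦ ?_⟩
    simp only [mul_smul]
    rw [hg' _ _ (by rw [hk, h, smul_zero]), hk' _ _ h]
  inv_mem' := by
    rintro g ⟨hg, hg'⟩
    have hginv (v w : Fin 7 → F) : cross (g⁻¹ • v) (g⁻¹ • w) = g⁻¹ • cross v w := by
      rw [eq_inv_smul_iff, ← hg, smul_inv_smul, smul_inv_smul]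
    refine ⟨hginv, fun v w h ↦ ?_⟩
    rw [eq_inv_smul_iff, ← hg' _ _ (by rw [hginv, h, smul_zero]), smul_inv_smul, smul_inv_smul]

lemma ReeGroup_le_reeStabilizer [CharP F 3] {t : ℕ} {σ : F →+* F} (hσ : IsTits t σ) :
    ReeGroup t ≤ reeStabilizer σ := by
  refine (Subgroup.closure_le _).2 ?_
  rintro g (⟨x, hx⟩ | ⟨x, hx⟩ | ⟨x, hx⟩ | ⟨l, hl⟩ | hg)
  · exact ⟨fun v w ↦ by simp only [gl_smul_def, hx, cross_amat_mulVec],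
      fun v w h ↦ by simp only [gl_smul_def, hx, starProd_amat_mulVec hσ h]⟩
  · exact ⟨fun v w ↦ by simp only [gl_smul_def, hx, cross_bmat_mulVec],
      fun v w h ↦ by simp only [gl_smul_def, hx, starProd_bmat_mulVec hσ h]⟩
  · exact ⟨fun v w ↦ by simp only [gl_smul_def, hx, cross_cmat_mulVec],
      fun v w h ↦ by simp only [gl_smul_def, hx, starProd_cmat_mulVec hσ h]⟩
  · exact ⟨fun v w ↦ by simp only [gl_smul_def, hl, cross_hmat_mulVec],
      fun v w _ ↦ by simp only [gl_smul_def, hl, starProd_hmat_mulVec hσ]⟩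
  · exact ⟨fun v w ↦ by simp only [gl_smul_def, hg, cross_ups_mulVec],
      fun v w _ ↦ by simp only [gl_smul_def, hg, starProd_ups_mulVec]⟩

section Elements

variable (t : ℕ)

lemma det_amat (x : F) : (amat t x).det = 1 := by
  have h : (amat t x).IsUpperTriangular := by
    intro i j hij
    fin_cases i <;> fin_cases j <;> simp [amat] at hij ⊢
  rw [det_of_isUpperTriangular h]
  simp [amat, Fin.prod_univ_succ]

lemma det_bmat (x : F) : (bmat t x).det = 1 := by
  have h : (bmat t x).IsUpperTriangular := by
    intro i j hij
    fin_cases i <;> fin_cases j <;> simp [bmat] at hij ⊢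
  rw [det_of_isUpperTriangular h]
  simp [bmat, Fin.prod_univ_succ]

lemma det_cmat (x : F) : (cmat t x).det = 1 := by
  have h : (cmat t x).IsUpperTriangular := by
    intro i j hij
    fin_cases i <;> fin_cases j <;> simp [cmat] at hij ⊢
  rw [det_of_isUpperTriangular h]
  simp [cmat, Fin.prod_univ_succ]

lemma exists_mem_ReeGroup_amat (x : F) :
    ∃ g ∈ ReeGroup (F := F) t, ∀ v : Fin 7 → F, g • v = amat t x *ᵥ v :=
  ⟨.mkOfDetNeZero (amat t x) (by simp [det_amat]), Subgroup.subset_closure (.inl ⟨x, rfl⟩),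
    fun _ ↦ rfl⟩

lemma exists_mem_ReeGroup_bmat (x : F) :
    ∃ g ∈ ReeGroup (F := F) t, ∀ v : Fin 7 → F, g • v = bmat t x *ᵥ v :=
  ⟨.mkOfDetNeZero (bmat t x) (by simp [det_bmat]), Subgroup.subset_closure (.inr (.inl ⟨x, rfl⟩)),
    fun _ ↦ rfl⟩

lemma exists_mem_ReeGroup_cmat (x : F) :
    ∃ g ∈ ReeGroup (F := F) t, ∀ v : Fin 7 → F, g • v = cmat t x *ᵥ v :=
  ⟨.mkOfDetNeZero (cmat t x) (by simp [det_cmat]),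
    Subgroup.subset_closure (.inr (.inr (.inl ⟨x, rfl⟩))), fun _ ↦ rfl⟩

lemma hmat_one : hmat t (1 : Fˣ) = 1 := by
  ext i j
  fin_cases i <;> fin_cases j <;> simp [hmat]

lemma hmat_mul (l k : Fˣ) : hmat t (l * k) = hmat t l * hmat t k := by
  rw [hmat, hmat, hmat, diagonal_mul_diagonal, diagonal_eq_diagonal_iff]
  intro i
  fin_cases i <;> simp [mul_zpow, mul_pow, mul_comm]

/-- The torus `H(q)`, parametrized by `λ ↦ h(λ)`. -/
def torus : Fˣ →* GL (Fin 7) F :=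
  MonoidHom.toHomUnits ⟨⟨hmat t, hmat_one t⟩, hmat_mul t⟩

lemma torus_mem_ReeGroup (l : Fˣ) : torus t l ∈ ReeGroup t :=
  Subgroup.subset_closure (.inr (.inr (.inr (.inl ⟨l, rfl⟩))))

lemma torus_smul (l : Fˣ) (v : Fin 7 → F) :
    torus t l • v =
      ![(l : F) ^ t * v 0, l / (l : F) ^ t * v 1, ((l : F) ^ t) ^ 2 / l * v 2, v 3,
        l / ((l : F) ^ t) ^ 2 * v 4, (l : F) ^ t / l * v 5, v 6 / (l : F) ^ t] :=
  hmat_mulVec t l v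

lemma torus_injective : Function.Injective (torus (F := F) t) := by
  refine (injective_iff_map_eq_one _).2 fun l hl ↦ ?_
  have hl (v : Fin 7 → F) : torus t l • v = v := by rw [hl, one_smul]
  have h0 := congrFun (hl 1) 0
  have h1 := congrFun (hl 1) 1
  simp only [torus_smul, cons_val, Pi.one_apply, mul_one] at h0 h1
  simpa [h0] using h1

variable (F) in
/-- The matrix `Υ` as an element of `GL(7, F)`. -/
def weyl : GL (Fin 7) F where
  val := ups
  inv := ups
  val_inv := by ext i j; fin_cases i <;> fin_cases j <;> simp [ups, mul_apply, Fin.sum_univ_succ]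
  inv_val := by ext i j; fin_cases i <;> fin_cases j <;> simp [ups, mul_apply, Fin.sum_univ_succ]

lemma weyl_mem_ReeGroup : weyl F ∈ ReeGroup t :=
  Subgroup.subset_closure (.inr (.inr (.inr (.inr rfl))))

lemma weyl_smul (v : Fin 7 → F) :
    weyl F • v = ![-v 6, -v 5, -v 4, -v 3, -v 2, -v 1, -v 0] :=
  ups_mulVec v

lemma weyl_mul_torus_mul_inv (l : Fˣ) : weyl F * torus t l * (weyl F)⁻¹ = (torus t l)⁻¹ := by
  rw [mul_inv_eq_iff_eq_mul, ← map_inv]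
  refine eq_of_smul_eq_smul fun v : Fin 7 → F ↦ ?_
  simp only [mul_smul, weyl_smul, torus_smul, cons_val, vecCons_inj, Units.val_inv_eq_inv_val,
    inv_pow]
  refine ⟨?_, ?_, ?_, trivial, ?_, ?_, ?_, trivial⟩ <;> field_simp

variable {t} in
lemma exists_shear {σ : F →+* F} (hσ : IsTits t σ) (a b c : F) :
    ∃ u ∈ ReeGroup (F := F) t, u • (basisVec 0 : Fin 7 → F) = basisVec 0 ∧
      ∀ v : Fin 7 → F, (u • v) 6 = v 6 ∧ (u • v) 5 = v 5 - c * v 6 ∧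
        (u • v) 4 = v 4 - b * v 6 - σ c ^ 3 * (v 5 - c * v 6) ∧
        (u • v) 3 = v 3 - a * v 6 + c * (v 4 - b * v 6) - b * (v 5 - c * v 6) := by
  obtain ⟨α, hα, hαv⟩ := exists_mem_ReeGroup_amat t (σ c ^ 3)
  obtain ⟨β, hβ, hβv⟩ := exists_mem_ReeGroup_bmat t (-σ b ^ 3)
  obtain ⟨γ, hγ, hγv⟩ := exists_mem_ReeGroup_cmat t (σ (a + c * b) ^ 3)
  -- `α` shifts entry 5 by `-c * v 6`, then `β` adjusts entry 4 and `γ` entry 3.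
  refine ⟨γ * β * α, mul_mem (mul_mem hγ hβ) hα, ?_, fun v ↦ ?_⟩
  · simp only [mul_smul, hαv, hβv, hγv, amat_mulVec, bmat_mulVec, cmat_mulVec, cons_val]
    ext i
    fin_cases i <;> simp
  · simp only [mul_smul, hαv, hβv, hγv, amat_mulVec, bmat_mulVec, cmat_mulVec, cons_val,
      ← hσ.apply_eq, map_neg, hσ.apply_cube]
    refine ⟨trivial, trivial, ?_, ?_⟩ <;> ring

end Elements

/-! ### The ovoid -/

/-- The nonzero vectors spanning the points of the Ree–Tits ovoid, following Wilson: those with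
`v = v ⋆ w` for some `w` such that `v × w = 0`, where `×` is `cross` and `⋆` is `starProd σ`. -/
def IsOvoidVector (σ : F →+* F) (v : Fin 7 → F) : Prop :=
  v ≠ 0 ∧ ∃ w, cross v w = 0 ∧ starProd σ v w = v

section Ovoid

variable {σ : F →+* F} {v : Fin 7 → F}

lemma IsOvoidVector.smul (hv : IsOvoidVector σ v) {g : GL (Fin 7) F} (hg : g ∈ reeStabilizer σ) :
    IsOvoidVector σ (g • v) := by
  obtain ⟨hv0, w, hcross, hstar⟩ := hv
  refine ⟨(smul_ne_zero_iff_ne g).2 hv0, g • w, ?_, ?_⟩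
  · rw [hg.1, hcross, smul_zero]
  · rw [hg.2 v w hcross, hstar]

lemma isOvoidVector_basisVec_zero : IsOvoidVector σ (basisVec 0) :=
  ⟨by simp, basisVec 1, by simp [cross], by ext i; fin_cases i <;> simp [starProd]⟩

lemma isOvoidVector_basisVec_six : IsOvoidVector σ (basisVec 6) :=
  ⟨by simp, -basisVec 5, by simp [cross], by ext i; fin_cases i <;> simp [starProd]⟩

lemma IsOvoidVector.const_smul {t : ℕ} (hσ : IsTits t σ) (hv : IsOvoidVector σ v) {c : F}
    (hc : c ≠ 0) : IsOvoidVector σ (c • v) := by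
  obtain ⟨hv0, w, hcross, hstar⟩ := hv
  have hcd : σ (c * (σ c ^ 3 / c)) = c := by rw [mul_div_cancel₀ _ hc, hσ.apply_cube]
  refine ⟨smul_ne_zero hc hv0, (σ c ^ 3 / c) • w, ?_, ?_⟩
  · rw [cross_smul_smul, hcross, smul_zero]
  · rw [starProd_smul_smul, hstar, hcd]

lemma IsOvoidVector.eq_smul_basisVec_zero (hv : IsOvoidVector σ v) (h6 : v 6 = 0) :
    v = v 0 • basisVec 0 := by
  obtain ⟨-, w, hc, hp⟩ := hv
  rw [funext_iff, forall_fin_seven] at hc hp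
  simp only [cross, starProd, cons_val, h6, Pi.zero_apply, zero_mul, sub_zero] at hc hp
  obtain ⟨c0, c1, c2, c3, c4, c5, c6⟩ := hc
  obtain ⟨p0, p1, p2, p3, p4, p5, p6⟩ := hp
  have key : v 1 = 0 ∧ v 2 = 0 ∧ v 3 = 0 ∧ v 4 = 0 ∧ v 5 = 0 := by
    rw [map_eq_zero] at p6
    by_cases w6 : w 6 = 0
    · have v5 : v 5 = 0 := by rw [← p5, w6, mul_zero, map_zero]
      by_cases w5 : w 5 = 0
      · have v4 : v 4 = 0 := by rw [← p4, v5, w5]; simp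
        have v2w4 : v 2 * w 4 = 0 := by grind
        have v3 : v 3 = 0 := by rw [← p3, v5, v4, w5, v2w4]; simp
        have v2 : v 2 = 0 := by
          by_contra h
          have w4 : w 4 = 0 := by grind
          exact h (by rw [← p2, w4, v4]; simp)
        have v1 : v 1 = 0 := by
          by_contra h
          rw [v2, map_eq_zero] at p2
          have w2 : w 2 = 0 := by grind
          exact h (by rw [← p1, w2, v2]; simp)
        exact ⟨v1, v2, v3, v4, v5⟩
      · have v4 : v 4 = 0 := by grind
        have v3 : v 3 = 0 := by grind
        rw [v4, map_eq_zero] at p4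
        rw [v3, map_eq_zero] at p3
        grind
    · have v5 : v 5 = 0 := by grind
      rw [v5, map_eq_zero] at p5
      grind
  ext i
  fin_cases i <;> simp [key, h6]

lemma IsOvoidVector.eq_basisVec_six (hv : IsOvoidVector σ v) (h6 : v 6 = 1) (h3 : v 3 = 0)
    (h4 : v 4 = 0) (h5 : v 5 = 0) : v = basisVec 6 := by
  obtain ⟨-, w, hc, hp⟩ := hv
  rw [funext_iff, forall_fin_seven] at hc hp
  simp only [cross, starProd, cons_val, h3, h4, h5, h6, Pi.zero_apply, zero_mul, one_mul, sub_zero,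
    map_eq_zero] at hc hp
  have h012 : v 0 = 0 ∧ v 1 = 0 ∧ v 2 = 0 := by grind
  ext i
  fin_cases i <;> simp [h012, h3, h4, h5, h6]

end Ovoid

/-! ### The stabilizer of two points -/

section TwoPointStabilizer

variable {t : ℕ} {σ : F →+* F} {g : GL (Fin 7) F}

lemma cross_basisVec_zero (v : Fin 7 → F) :
    cross (basisVec 0) v = ![v 3, v 4, -v 5, v 6, 0, 0, 0] := by
  simp [cross]

lemma cross_basisVec_three (v : Fin 7 → F) :
    cross (basisVec 3) v = ![-v 0, v 1, v 2, 0, -v 4, -v 5, v 6] := by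
  simp [cross]

lemma starProd_basisVec_zero (σ : F →+* F) (v : Fin 7 → F) :
    starProd σ (basisVec 0) v = ![σ (v 1), σ (v 2), 0, 0, 0, 0, 0] := by
  simp [starProd]

lemma eq_of_starProd_basisVec_zero_eq [CharP F 3] {v w : Fin 7 → F}
    (hv0 : cross (basisVec 0) v = 0) (hv3 : cross (basisVec 3) v = v)
    (hw0 : cross (basisVec 0) w = 0) (hw3 : cross (basisVec 3) w = w)
    (h : starProd σ (basisVec 0) v = starProd σ (basisVec 0) w) : v = w := by
  simp only [cross_basisVec_zero, cross_basisVec_three, starProd_basisVec_zero, funext_iff,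
    forall_fin_seven, cons_val, Pi.zero_apply, σ.injective.eq_iff] at *
  grind

lemma cross_basisVec :
    cross (basisVec 0 : Fin 7 → F) (basisVec 1) = 0 ∧
    cross (basisVec 0 : Fin 7 → F) (basisVec 2) = 0 ∧
    cross (basisVec 0 : Fin 7 → F) (basisVec 3) = basisVec 0 ∧
    cross (basisVec 0 : Fin 7 → F) (basisVec 6) = basisVec 3 ∧
    cross (basisVec 3 : Fin 7 → F) (basisVec 1) = basisVec 1 ∧
    cross (basisVec 3 : Fin 7 → F) (basisVec 2) = basisVec 2 ∧
    cross (basisVec 6 : Fin 7 → F) (basisVec 1) = basisVec 4 ∧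
    cross (basisVec 2 : Fin 7 → F) (basisVec 6) = basisVec 5 := by
  and_intros <;> ext i <;> fin_cases i <;> simp [cross]

/-- The products produce `e₃` from `e₀` and `e₆`, and `e₄`, `e₅` from `e₁`, `e₂` and `e₆`, while
`e₁` and `e₂` are determined by their products with `e₀` and `e₃`. -/
lemma eq_one_of_smul_basisVec [CharP F 3] (hg : g ∈ reeStabilizer σ)
    (h0 : g • (basisVec 0 : Fin 7 → F) = basisVec 0) {k : F}
    (h6 : g • (basisVec 6 : Fin 7 → F) = k • basisVec 6) : g = 1 := by
  obtain ⟨hcross, hstar⟩ := hg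
  obtain ⟨e01, e02, e03, e06, e31, e32, e61, e26⟩ := cross_basisVec (F := F)
  have h3 : g • basisVec 3 = k • basisVec (F := F) 3 := by
    rw [← e06, ← hcross, h0, h6]
    simpa using cross_smul_smul 1 k (basisVec 0) (basisVec 6)
  obtain rfl : k = 1 := by
    have h : basisVec 0 = k • basisVec (F := F) 0 := calc
      basisVec 0 = g • basisVec 0 := h0.symm
      _ = g • cross (basisVec 0) (basisVec 3) := by rw [e03]
      _ = cross (basisVec 0) (k • basisVec 3) := by rw [← hcross, h0, h3]
      _ = k • basisVec 0 := by
        simpa [e03] using cross_smul_smul 1 k (basisVec 0) (basisVec 3)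
    simpa using (congrFun h 0).symm
  rw [one_smul] at h3 h6
  have hfix {i j : Fin 7} (h0i : cross (basisVec 0) (basisVec (F := F) i) = 0)
      (h3i : cross (basisVec 3) (basisVec (F := F) i) = basisVec i)
      (hij : starProd σ (basisVec 0) (basisVec i) = basisVec j)
      (hj : g • basisVec j = basisVec (F := F) j) : g • basisVec i = basisVec (F := F) i := by
    refine eq_of_starProd_basisVec_zero_eq (σ := σ) ?_ ?_ h0i h3i ?_
    · rw [← h0, hcross, h0i, smul_zero]
    · rw [← h3, hcross, h3i]
    · rw [← h0, hstar _ _ h0i, h0, hij, hj]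
  have h1 := hfix e01 e31 (j := 0) (by ext i; fin_cases i <;> simp [starProd]) h0
  have h2 := hfix e02 e32 (j := 1) (by ext i; fin_cases i <;> simp [starProd]) h1
  have h4 : g • basisVec 4 = basisVec (F := F) 4 := by rw [← e61, ← hcross, h6, h1]
  have h5 : g • basisVec 5 = basisVec (F := F) 5 := by rw [← e26, ← hcross, h2, h6]
  refine Units.ext (ext_of_mulVec_single fun i ↦ ?_)
  rw [Units.val_one, one_mulVec]
  exact forall_fin_seven (p := fun i ↦ g • basisVec i = basisVec (F := F) i).2
    ⟨h0, h1, h2, h3, h4, h5, h6⟩ i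

lemma exists_eq_torus [CharP F 3] (hσ : IsTits t σ) (hg : g ∈ reeStabilizer σ) {d k : F}
    (h0 : g • (basisVec 0 : Fin 7 → F) = d • basisVec 0)
    (h6 : g • (basisVec 6 : Fin 7 → F) = k • basisVec 6) : ∃ l, g = torus t l := by
  have hd : d ≠ 0 := by
    rintro rfl
    simp [smul_eq_zero_iff_eq] at h0
  obtain ⟨l, hl⟩ : ∃ l : Fˣ, (l : F) ^ t = d :=
    ⟨Units.mk0 (σ d ^ 3) (by simpa using hd), by simp [← hσ.apply_eq, hσ.cube]⟩
  have htorus := ReeGroup_le_reeStabilizer hσ (torus_mem_ReeGroup t l)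
  have hone : (torus t l)⁻¹ * g = 1 :=
    eq_one_of_smul_basisVec (mul_mem (inv_mem htorus) hg) (k := k * d) ?_ ?_
  · exact ⟨l, (inv_mul_eq_one.1 hone).symm⟩
  · rw [mul_smul, h0, inv_smul_eq_iff, torus_smul, hl]
    ext i
    fin_cases i <;> simp
  · rw [mul_smul, h6, inv_smul_eq_iff, torus_smul, hl]
    ext i
    fin_cases i <;> simp [hd]

end TwoPointStabilizer

/-! ### The action on the ovoid -/

open scoped LinearAlgebra.Projectivization

open Projectivization

variable {t : ℕ} {σ : F →+* F}

section AffinePart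

variable [CharP F 3]

lemma exists_smul_eq_basisVec_six_iff (hσ : IsTits t σ) (a b c : F) :
    ∃ u ∈ ReeGroup (F := F) t, u • (basisVec 0 : Fin 7 → F) = basisVec 0 ∧
      ∀ v, IsOvoidVector σ v →
        (u • v = basisVec 6 ↔ v 6 = 1 ∧ v 3 = a ∧ v 4 = b ∧ v 5 = c) := by
  obtain ⟨u, hu, hu0, huv⟩ := exists_shear hσ a b c
  refine ⟨u, hu, hu0, fun v hv ↦ ?_⟩
  obtain ⟨u6, u5, u4, u3⟩ := huv v
  constructor
  · intro h
    simp only [h, Pi.single_apply, Fin.reduceEq, if_true, if_false] at u6 u5 u4 u3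
    grind
  · rintro ⟨h6, rfl, rfl, rfl⟩
    refine (hv.smul (ReeGroup_le_reeStabilizer hσ hu)).eq_basisVec_six ?_ ?_ ?_ ?_ <;> grind

lemma existsUnique_isOvoidVector (hσ : IsTits t σ) (a b c : F) :
    ∃! v, IsOvoidVector σ v ∧ v 6 = 1 ∧ v 3 = a ∧ v 4 = b ∧ v 5 = c := by
  obtain ⟨u, hu, -, huv⟩ := exists_smul_eq_basisVec_six_iff hσ a b c
  have hv : IsOvoidVector σ (u⁻¹ • basisVec 6) :=
    isOvoidVector_basisVec_six.smul (inv_mem (ReeGroup_le_reeStabilizer hσ hu))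
  refine ⟨u⁻¹ • basisVec 6, ⟨hv, (huv _ hv).1 (smul_inv_smul _ _)⟩, fun w ⟨hw, hcoords⟩ ↦ ?_⟩
  rw [eq_inv_smul_iff, (huv w hw).2 hcoords]

end AffinePart

section Ovoid

variable [CharP F 3] (hσ : IsTits t σ)

/-- The Ree–Tits ovoid, the set of points of projective space spanned by ovoid vectors, with the
action of the Ree group. -/
def ovoid : SubMulAction (ReeGroup (F := F) t) (ℙ F (Fin 7 → F)) where
  carrier := {p | ∃ v, ∃ hv : IsOvoidVector σ v, mk F v hv.1 = p}
  smul_mem' := by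
    rintro g _ ⟨v, hv, rfl⟩
    exact ⟨(g : GL (Fin 7) F) • v, hv.smul (ReeGroup_le_reeStabilizer hσ g.2), rfl⟩

/-- The point of the ovoid spanned by an ovoid vector. -/
def ovoidPoint (v : Fin 7 → F) (hv : IsOvoidVector σ v) : ovoid hσ :=
  ⟨mk F v hv.1, v, hv, rfl⟩

variable {hσ} {v w : Fin 7 → F} (hv : IsOvoidVector σ v) (hw : IsOvoidVector σ w)

lemma ovoidPoint_eq_iff : ovoidPoint hσ v hv = ovoidPoint hσ w hw ↔ ∃ c : F, c • w = v :=
  Subtype.ext_iff.trans (mk_eq_mk_iff' F v w hv.1 hw.1)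

lemma smul_ovoidPoint (g : ReeGroup (F := F) t) :
    g • ovoidPoint hσ v hv =
      ovoidPoint hσ ((g : GL (Fin 7) F) • v) (hv.smul (ReeGroup_le_reeStabilizer hσ g.2)) :=
  rfl

variable (hσ) in
/-- The point at infinity of the ovoid, spanned by `e₀`. -/
def ovoidInfty : ovoid hσ := ovoidPoint hσ (basisVec 0) isOvoidVector_basisVec_zero

variable (hσ) in
/-- The origin of the affine part of the ovoid, spanned by `e₆`. -/
def ovoidZero : ovoid hσ := ovoidPoint hσ (basisVec 6) isOvoidVector_basisVec_six

lemma ovoidPoint_ne_ovoidInfty (h : v 6 = 1) : ovoidPoint hσ v hv ≠ ovoidInfty hσ := by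
  rw [ovoidInfty, Ne, ovoidPoint_eq_iff]
  rintro ⟨c, rfl⟩
  simp at h

lemma exists_eq_ovoidPoint (p : ovoid hσ) (hp : p ≠ ovoidInfty hσ) :
    ∃ v, ∃ hv : IsOvoidVector σ v, v 6 = 1 ∧ ovoidPoint hσ v hv = p := by
  obtain ⟨_, v, hv, rfl⟩ := p
  have hv6 : v 6 ≠ 0 := fun h ↦
    hp ((ovoidPoint_eq_iff hv _).2 ⟨v 0, (hv.eq_smul_basisVec_zero h).symm⟩)
  exact ⟨(v 6)⁻¹ • v, hv.const_smul hσ (inv_ne_zero hv6), by simp [hv6],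
    (ovoidPoint_eq_iff _ hv).2 ⟨(v 6)⁻¹, rfl⟩⟩

variable (hσ) in
/-- Apart from the point at infinity the ovoid is an affine space of dimension three: the affine
coordinates are the entries `3`, `4` and `5` of the spanning vector whose entry `6` is `1`. -/
lemma card_ovoid [Finite F] : Nat.card (ovoid hσ) = Nat.card F ^ 3 + 1 := by
  let A := {v : Fin 7 → F // IsOvoidVector σ v ∧ v 6 = 1}
  have hcoords : Function.Bijective fun v : A ↦ (v.1 3, v.1 4, v.1 5) := by
    refine (Function.bijective_iff_existsUnique _).2 fun ⟨a, b, c⟩ ↦ ?_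
    obtain ⟨v, ⟨hv, h6, hvc⟩, huniq⟩ := existsUnique_isOvoidVector hσ a b c
    refine ⟨⟨v, hv, h6⟩, by simp [hvc], fun w hw ↦ Subtype.ext (huniq w ⟨w.2.1, w.2.2, ?_⟩)⟩
    simpa using hw
  have hpoints : Function.Bijective fun v : Option A ↦
      v.elim (ovoidInfty hσ) fun v ↦ ovoidPoint hσ v.1 v.2.1 := by
    constructor
    · rintro (_ | v) (_ | w) h
      · rfl
      · exact (ovoidPoint_ne_ovoidInfty w.2.1 w.2.2 h.symm).elim
      · exact (ovoidPoint_ne_ovoidInfty v.2.1 v.2.2 h).elim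
      · obtain ⟨c, hc⟩ := (ovoidPoint_eq_iff v.2.1 w.2.1).1 h
        obtain rfl : c = 1 := by simpa [v.2.2, w.2.2] using congrFun hc 6
        rw [one_smul] at hc
        rw [Subtype.ext hc]
    · intro p
      by_cases hp : p = ovoidInfty hσ
      · exact ⟨none, hp.symm⟩
      · obtain ⟨v, hv, hv6, hvp⟩ := exists_eq_ovoidPoint p hp
        exact ⟨some ⟨v, hv, hv6⟩, hvp⟩
  rw [← Nat.card_eq_of_bijective _ hpoints, Finite.card_option, Nat.card_eq_of_bijective _ hcoords,
    Nat.card_prod, Nat.card_prod]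
  ring

lemma exists_smul_eq_ovoidZero {p : ovoid hσ} (hp : p ≠ ovoidInfty hσ) :
    ∃ g : ReeGroup (F := F) t, g • ovoidInfty hσ = ovoidInfty hσ ∧ g • p = ovoidZero hσ := by
  obtain ⟨v, hv, hv6, rfl⟩ := exists_eq_ovoidPoint p hp
  obtain ⟨u, hu, hu0, huv⟩ := exists_smul_eq_basisVec_six_iff hσ (v 3) (v 4) (v 5)
  have huv6 : u • v = basisVec 6 := (huv v hv).2 ⟨hv6, rfl, rfl, rfl⟩
  refine ⟨⟨u, hu⟩, ?_, ?_⟩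
  · simp only [ovoidInfty, smul_ovoidPoint, hu0]
  · simp only [ovoidZero, smul_ovoidPoint, huv6]

variable (F t) in
/-- The element `Υ` of the Ree group. -/
def reeWeyl : ReeGroup (F := F) t := ⟨weyl F, weyl_mem_ReeGroup t⟩

lemma reeWeyl_smul_ovoidZero : reeWeyl F t • ovoidZero hσ = ovoidInfty hσ := by
  rw [ovoidZero, ovoidInfty, smul_ovoidPoint, ovoidPoint_eq_iff]
  refine ⟨-1, ?_⟩
  simp only [reeWeyl, weyl_smul]
  ext i
  fin_cases i <;> simp

lemma reeWeyl_smul_ovoidInfty : reeWeyl F t • ovoidInfty hσ = ovoidZero hσ := by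
  rw [ovoidZero, ovoidInfty, smul_ovoidPoint, ovoidPoint_eq_iff]
  refine ⟨-1, ?_⟩
  simp only [reeWeyl, weyl_smul]
  ext i
  fin_cases i <;> simp

lemma exists_smul_eq_infty_and_zero {p q : ovoid hσ} (hpq : p ≠ q) :
    ∃ g : ReeGroup (F := F) t, g • p = ovoidInfty hσ ∧ g • q = ovoidZero hσ := by
  obtain ⟨k, hk⟩ : ∃ k : ReeGroup (F := F) t, k • p = ovoidInfty hσ := by
    by_cases hp : p = ovoidInfty hσ
    · exact ⟨1, by rw [one_smul, hp]⟩
    · obtain ⟨u, -, hu⟩ := exists_smul_eq_ovoidZero hp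
      exact ⟨reeWeyl F t * u, by rw [mul_smul, hu, reeWeyl_smul_ovoidZero]⟩
  have hq : k • q ≠ ovoidInfty hσ := fun h ↦ hpq (smul_left_cancel k (hk.trans h.symm))
  obtain ⟨u, hu, huq⟩ := exists_smul_eq_ovoidZero hq
  exact ⟨u * k, by rw [mul_smul, hk, hu], by rw [mul_smul, huq]⟩

end Ovoid

section TorusPair

open MulAction

variable (F t) in
/-- The torus `H(q)` inside the Ree group. -/
def reeTorus : Fˣ →* ReeGroup (F := F) t :=
  (torus t).codRestrict _ (torus_mem_ReeGroup t)

lemma reeTorus_injective : Function.Injective (reeTorus F t) := fun _ _ h ↦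
  torus_injective t (congrArg Subtype.val h)

variable [CharP F 3] {hσ : IsTits t σ}

lemma reeTorus_mem_fixingSubgroup (l : Fˣ) :
    reeTorus F t l ∈ fixingSubgroup (ReeGroup (F := F) t) {ovoidInfty hσ, ovoidZero hσ} := by
  rw [mem_fixingSubgroup_pair, ovoidInfty, ovoidZero, smul_ovoidPoint, smul_ovoidPoint,
    ovoidPoint_eq_iff, ovoidPoint_eq_iff]
  refine ⟨⟨(l : F) ^ t, ?_⟩, ⟨((l : F) ^ t)⁻¹, ?_⟩⟩ <;>
  · simp only [reeTorus, MonoidHom.codRestrict_apply, torus_smul]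
    ext i
    fin_cases i <;> simp

lemma exists_eq_reeTorus {g : ReeGroup (F := F) t}
    (hg : g ∈ fixingSubgroup (ReeGroup (F := F) t) {ovoidInfty hσ, ovoidZero hσ}) :
    ∃ l, reeTorus F t l = g := by
  rw [mem_fixingSubgroup_pair, ovoidInfty, ovoidZero, smul_ovoidPoint, smul_ovoidPoint,
    ovoidPoint_eq_iff, ovoidPoint_eq_iff] at hg
  obtain ⟨⟨d, hd⟩, ⟨k, hk⟩⟩ := hg
  obtain ⟨l, hl⟩ := exists_eq_torus hσ (ReeGroup_le_reeStabilizer hσ g.2) hd.symm hk.symm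
  exact ⟨l, Subtype.ext hl.symm⟩

lemma eq_infty_or_eq_zero_of_reeTorus_smul {l : Fˣ} (hl : l ^ 2 ≠ 1) {p : ovoid hσ}
    (hp : reeTorus F t l • p = p) : p = ovoidInfty hσ ∨ p = ovoidZero hσ := by
  refine or_iff_not_imp_left.2 fun hp' ↦ ?_
  obtain ⟨v, hv, hv6, rfl⟩ := exists_eq_ovoidPoint p hp'
  rw [smul_ovoidPoint, ovoidPoint_eq_iff] at hp
  obtain ⟨c, hc⟩ := hp
  simp only [reeTorus, MonoidHom.codRestrict_apply, torus_smul, funext_iff, forall_fin_seven,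
    Pi.smul_apply, smul_eq_mul, cons_val, hv6, mul_one, ← hσ.apply_eq] at hc
  obtain ⟨-, -, -, h3, h4, h5, rfl⟩ := hc
  have hl2 : (l : F) ^ 2 ≠ 1 := fun h ↦ hl (Units.ext (by simpa using h))
  have hl0 : (l : F) ≠ 0 := l.ne_zero
  have hcube := hσ.cube l
  have hd0 : σ l ≠ 0 := (map_ne_zero σ).2 hl0
  have hv3 : v 3 = 0 := by
    by_contra h
    have hd : σ l = 1 := by grind
    rw [hd, map_one] at hcube
    grind
  have hv4 : v 4 = 0 := by
    by_contra h
    have hd : σ l = l := by grind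
    rw [hd, hd] at hcube
    grind
  have hv5 : v 5 = 0 := by
    by_contra h
    have hd : σ l ^ 2 = l := by grind
    have hd' : σ (σ l) ^ 2 = σ l := by rw [← map_pow, hd]
    grind
  obtain rfl := hv.eq_basisVec_six hv6 hv3 hv4 hv5
  rfl

variable (hσ) in
lemma isTorusPair_infty_zero [Finite F] :
    IsTorusPair (ReeGroup (F := F) t) (Nat.card F - 1) (ovoidInfty hσ) (ovoidZero hσ) := by
  let T : Fˣ →* fixingSubgroup (ReeGroup (F := F) t) {ovoidInfty hσ, ovoidZero hσ} :=
    (reeTorus F t).codRestrict _ reeTorus_mem_fixingSubgroup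
  have hT : Function.Bijective T :=
    ⟨fun _ _ h ↦ reeTorus_injective (congrArg Subtype.val h), fun g ↦
      (exists_eq_reeTorus g.2).imp fun _ h ↦ Subtype.ext h⟩
  refine ⟨isCyclic_of_surjective T hT.2, ?_, ?_, reeWeyl F t, reeWeyl_smul_ovoidInfty,
    reeWeyl_smul_ovoidZero, ?_⟩
  · rw [← Nat.card_eq_of_bijective T hT, Nat.card_units]
  · intro a ha ha2 p hp
    obtain ⟨l, rfl⟩ := exists_eq_reeTorus ha
    exact eq_infty_or_eq_zero_of_reeTorus_smul (fun h ↦ ha2 (by rw [← map_pow, h, map_one])) hp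
  · intro a ha
    obtain ⟨l, rfl⟩ := exists_eq_reeTorus ha
    exact Subtype.ext (weyl_mul_torus_mul_inv t l)

lemma isTorusPair_of_ne [Finite F] {p q : ovoid hσ} (hpq : p ≠ q) :
    IsTorusPair (ReeGroup (F := F) t) (Nat.card F - 1) p q := by
  obtain ⟨g, hp, hq⟩ := exists_smul_eq_infty_and_zero hpq
  rw [← inv_smul_eq_iff.2 hp.symm, ← inv_smul_eq_iff.2 hq.symm]
  exact (isTorusPair_infty_zero hσ).smul g⁻¹

end TorusPair

/-! ### Elements of order `q - 1` -/

lemma exists_odd_prime_dvd_of_not_four_dvd {n : ℕ} (hn : 2 < n) (h4 : ¬ 4 ∣ n) :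
    ∃ l, l.Prime ∧ 2 < l ∧ l ∣ n := by
  obtain ⟨k, rfl⟩ | ⟨l, hl, hln, hodd⟩ := Nat.eq_two_pow_or_exists_odd_prime_and_dvd n
  · have hk : 2 ≤ k := by
      by_contra! hk
      interval_cases k <;> simp at hn
    exact (h4 (pow_dvd_pow 2 hk)).elim
  · exact ⟨l, hl, hl.two_le.lt_of_ne' (by rintro rfl; exact absurd hodd (by decide)), hln⟩

lemma not_four_dvd_three_pow_sub_one (m : ℕ) : ¬ 4 ∣ 3 ^ (2 * m + 1) - 1 := by
  have h : 3 ^ (2 * m + 1) ≡ 3 [MOD 4] := by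
    rw [pow_succ, pow_mul]
    simpa using ((show 3 ^ 2 ≡ 1 [MOD 4] by decide).pow m).mul_right 3
  rw [Nat.ModEq] at h
  lia

lemma isTits_iterateFrobenius [Fintype F] [ExpChar F 3] {m : ℕ}
    (hF : Fintype.card F = 3 ^ (2 * m + 1)) : IsTits (3 ^ m) (iterateFrobenius F 3 m) where
  apply_eq x := rfl
  cube x := by
    have hexp : 3 ^ m * 3 ^ m * 3 = Fintype.card F := by rw [hF]; ring
    simp only [iterateFrobenius_def, ← pow_mul]
    rw [hexp, FiniteField.pow_card]

lemma two_mul_card_orderOf_ReeGroup [Finite F] [CharP F 3] (hσ : IsTits t σ) {l : ℕ}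
    (hl : l.Prime) (hl2 : 2 < l) (hlF : l ∣ Nat.card F - 1) :
    2 * Nat.card {g : ReeGroup (F := F) t // orderOf g = Nat.card F - 1} =
      (Nat.card F - 1).totient * (Nat.card F ^ 3 * (Nat.card F ^ 3 + 1)) := by
  have hF : 1 < Nat.card F := Finite.one_lt_card
  have hmod : Nat.card (ovoid hσ) ≡ 2 [MOD l] := by
    rw [card_ovoid]
    exact (((Nat.modEq_iff_dvd' hF.le).2 hlF).symm.pow 3).add_right 1
  rw [two_mul_card_orderOf_eq (Nat.sub_ne_zero_of_lt hF)
    (fun p q : ovoid hσ ↦ isTorusPair_of_ne) hl hl2 hlF hmod, card_ovoid,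
    Nat.add_sub_cancel, mul_comm (_ + 1)]

end ReePaper

/-- The number of elements of order exactly `q - 1` in `Ree(q)` equals
`φ(q-1) · q^3 (q^3 + 1) / 2`. -/
theorem order_q_minus_one_count (m : ℕ) (hm : 0 < m) (F : Type*) [Field F] [Fintype F]
    (hF : Fintype.card F = 3 ^ (2 * m + 1)) :
    2 * Nat.card {g : GL (Fin 7) F // g ∈ ReeGroup (F := F) (3 ^ m) ∧
        orderOf g = 3 ^ (2 * m + 1) - 1} =
      Nat.totient (3 ^ (2 * m + 1) - 1) * ((3 ^ (2 * m + 1)) ^ 3 * ((3 ^ (2 * m + 1)) ^ 3 + 1)) := by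
  have := charP_of_card_eq_prime_pow hF
  have hq : 2 < 3 ^ (2 * m + 1) - 1 := by
    have := Nat.pow_le_pow_right (n := 3) (by simp) (show 3 ≤ 2 * m + 1 by lia)
    lia
  obtain ⟨l, hl, hl2, hlq⟩ :=
    exists_odd_prime_dvd_of_not_four_dvd hq (not_four_dvd_three_pow_sub_one m)
  rw [← hF, ← Nat.card_eq_fintype_card] at hlq ⊢
  rw [← two_mul_card_orderOf_ReeGroup (isTits_iterateFrobenius hF) hl hl2 hlq]
  congr 1
  refine Nat.card_congr ((Equiv.subtypeSubtypeEquivSubtypeInter _ _).symm.trans ?_)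
  exact Equiv.subtypeEquivRight fun g ↦ by rw [Subgroup.orderOf_coe]
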